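/- arXiv:math/0308145 — 2 statements merged into one kernel-verified Lean document; each statement's English description precedes it below -/
import Mathlib

section
/- Let E, F be Banach spaces, n ≥ 2 and 0 < p < ∞. A continuous n-linear map T : E × ⋯ × E → F is of absolutely p-summing type if and only if for every i ∈ {1, …, n} there exists C_i ≥ 0 such that (∑_{j=1}^m ‖T(x_j^{(1)}, …, x_j^{(n)})‖^p)^{1/p} ≤ C_i ‖(x_j^{(i)})_{j=1}^m‖_{w,p} ∏_{k ≠ i} max_{1 ≤ j ≤ m} ‖x_j^{(k)}‖ for every m ∈ ℕ and all finite families x_j^{(k)} ∈ E; that is, T is of absolutely p-summing type if and only if T is absolutely (p; q_1, …, q_n)-summing for each of the n choices with q_i = p and q_k = ∞ for k ≠ i. -/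
open MeasureTheory

/-- Weak `ℓ_q` norm of a finite family in a normed space. -/
noncomputable def weakLpNorm (𝕜 : Type*) [RCLike 𝕜] {E : Type*} [NormedAddCommGroup E]
    [NormedSpace 𝕜 E] (q : ℝ) {m : ℕ} (x : Fin m → E) : ℝ :=
  ⨆ φ : {φ : E →L[𝕜] 𝕜 // ‖φ‖ ≤ 1}, (∑ j, ‖φ.1 (x j)‖ ^ q) ^ (1 / q)

/-- `T` satisfies the `p`-semi-integral inequality with constant `C`, witnessed by a regular
Borel probability measure on the product of the closed dual unit balls with their
weak-star topologies. -/
def SemiIntegralWith (𝕜 : Type*) [RCLike 𝕜] {ι : Type*} [Fintype ι] {E : ι → Type*}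
    [∀ i, NormedAddCommGroup (E i)] [∀ i, NormedSpace 𝕜 (E i)]
    {F : Type*} [NormedAddCommGroup F]
    (p C : ℝ) (T : (∀ i, E i) → F) : Prop :=
  letI : MeasurableSpace (∀ i, {φ : WeakDual 𝕜 (E i) // ∀ z, ‖φ z‖ ≤ ‖z‖}) := borel _
  ∃ μ : Measure (∀ i, {φ : WeakDual 𝕜 (E i) // ∀ z, ‖φ z‖ ≤ ‖z‖}),
    IsProbabilityMeasure μ ∧ μ.Regular ∧
      ∀ x : ∀ i, E i,
        ‖T x‖ ≤ C * (∫ φ, ∏ i, ‖(φ i).1 (x i)‖ ^ p ∂μ) ^ (1 / p)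

/-- The `si,p` norm: infimum of admissible constants. -/
noncomputable def siNorm (𝕜 : Type*) [RCLike 𝕜] {ι : Type*} [Fintype ι] {E : ι → Type*}
    [∀ i, NormedAddCommGroup (E i)] [∀ i, NormedSpace 𝕜 (E i)]
    {F : Type*} [NormedAddCommGroup F]
    (p : ℝ) (T : (∀ i, E i) → F) : ℝ :=
  sInf {C : ℝ | 0 ≤ C ∧ SemiIntegralWith 𝕜 p C T}

/-- `T` is absolutely `(p; q₁,…,qₙ)`-summing with constant `C`. -/
def AbsSummingWith (𝕜 : Type*) [RCLike 𝕜] {ι : Type*} [Fintype ι] {E : ι → Type*}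
    [∀ i, NormedAddCommGroup (E i)] [∀ i, NormedSpace 𝕜 (E i)]
    {F : Type*} [NormedAddCommGroup F]
    (p : ℝ) (q : ι → ℝ) (C : ℝ) (T : (∀ i, E i) → F) : Prop :=
  ∀ (m : ℕ) (x : ∀ i, Fin m → E i),
    (∑ j, ‖T (fun i => x i j)‖ ^ p) ^ (1 / p) ≤ C * ∏ i, weakLpNorm 𝕜 (q i) (x i)

/-- `T` is `p`-dominated with constant `C`, witnessed by regular Borel probability measures
on the closed dual unit balls with their weak-star topologies. -/
def DominatedWith (𝕜 : Type*) [RCLike 𝕜] {ι : Type*} [Fintype ι] {E : ι → Type*}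
    [∀ i, NormedAddCommGroup (E i)] [∀ i, NormedSpace 𝕜 (E i)]
    {F : Type*} [NormedAddCommGroup F]
    (p C : ℝ) (T : (∀ i, E i) → F) : Prop :=
  letI : ∀ i, MeasurableSpace {φ : WeakDual 𝕜 (E i) // ∀ z, ‖φ z‖ ≤ ‖z‖} := fun i => borel _
  ∃ μ : ∀ i, Measure {φ : WeakDual 𝕜 (E i) // ∀ z, ‖φ z‖ ≤ ‖z‖},
    (∀ i, IsProbabilityMeasure (μ i)) ∧ (∀ i, (μ i).Regular) ∧
      ∀ x : ∀ i, E i,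
        ‖T x‖ ≤ C * ∏ i, (∫ φ, ‖φ.1 (x i)‖ ^ p ∂(μ i)) ^ (1 / p)

/-- `E` is an `𝓛_∞`-space. -/
def IsLinftySpace (𝕜 : Type*) [RCLike 𝕜] (E : Type*) [NormedAddCommGroup E]
    [NormedSpace 𝕜 E] : Prop :=
  ∃ lam : ℝ, 1 ≤ lam ∧ ∀ M : Submodule 𝕜 E, FiniteDimensional 𝕜 M →
    ∃ N : Submodule 𝕜 E, M ≤ N ∧ FiniteDimensional 𝕜 N ∧
      ∃ v : N ≃L[𝕜] (Fin (Module.finrank 𝕜 N) → 𝕜),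
        ‖(v : N →L[𝕜] (Fin (Module.finrank 𝕜 N) → 𝕜))‖ *
          ‖(v.symm : (Fin (Module.finrank 𝕜 N) → 𝕜) →L[𝕜] N)‖ ≤ lam

/-- `F` has cotype `q`. -/
def HasCotype (q : ℝ) (F : Type*) [NormedAddCommGroup F] : Prop :=
  ∃ C : ℝ, 0 ≤ C ∧ ∀ (m : ℕ) (x : Fin m → F),
    (∑ j, ‖x j‖ ^ q) ^ (1 / q) ≤
      C * ((∑ ε : Fin m → Bool, ‖∑ j, (if ε j then x j else -x j)‖ ^ (2 : ℝ)) / 2 ^ m)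
        ^ ((1 : ℝ) / 2)

/-! The norm of `Ψᵢ(T)(a)` bounds `‖T v‖` whenever `v i = a`, after scaling the other coordinates
of `v` into the unit ball; raising to the power `p` and summing over `j`, with those coordinates
bounded by their maxima, gives one direction. Conversely, in a finite sum `∑ⱼ ‖Ψᵢ(T)(xⱼ)‖ ^ p` the
suprema for different `j` can be approximated independently of each other, which produces families
`x⁽ᵏ⁾`, `k ≠ i`, in the unit ball with nearly the same sum. The two conditions are thus equivalent
separately for each `i`, and with the same constant. -/

theorem pi_iSup_mem_of_isClosed {J R : Type*} [ConditionallyCompleteLinearOrder R]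
    [TopologicalSpace R] [OrderTopology R] {Y : J → Type*} [∀ j, Nonempty (Y j)]
    {f : ∀ j, Y j → R} (hf : ∀ j, BddAbove (Set.range (f j))) {S : Set (J → R)}
    (hS : IsClosed S) (h : ∀ y : ∀ j, Y j, (fun j => f j (y j)) ∈ S) :
    (fun j => ⨆ y, f j y) ∈ S := by
  have hsub : Set.univ.pi (fun j => Set.range (f j)) ⊆ S := by
    intro u hu
    choose y hy using fun j => hu j (Set.mem_univ j)
    exact funext hy ▸ h y
  refine closure_minimal hsub hS ?_
  rw [closure_pi_set]
  exact fun j _ => csSup_mem_closure (Set.range_nonempty _) (hf j)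

theorem rpow_sum_mul_rpow {J : Type*} (s : Finset J) {p : ℝ} (hp : p ≠ 0) {b : J → ℝ}
    (hb : ∀ j ∈ s, 0 ≤ b j) {P : ℝ} (hP : 0 ≤ P) :
    (∑ j ∈ s, (b j * P) ^ p) ^ (1 / p) = (∑ j ∈ s, b j ^ p) ^ (1 / p) * P := by
  rw [Finset.sum_congr rfl fun j hj => Real.mul_rpow (hb j hj) hP, ← Finset.sum_mul,
    Real.mul_rpow (Finset.sum_nonneg fun j hj => Real.rpow_nonneg (hb j hj) p)
      (Real.rpow_nonneg hP p), one_div, Real.rpow_rpow_inv hP hp]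

theorem rpow_sum_rpow_le_rpow_sum_rpow {J : Type*} (s : Finset J) {p : ℝ} (hp : 0 ≤ p)
    {a b : J → ℝ} (ha : ∀ j ∈ s, 0 ≤ a j) (hab : ∀ j ∈ s, a j ≤ b j) :
    (∑ j ∈ s, a j ^ p) ^ (1 / p) ≤ (∑ j ∈ s, b j ^ p) ^ (1 / p) :=
  Real.rpow_le_rpow (Finset.sum_nonneg fun j hj => Real.rpow_nonneg (ha j hj) p)
    (Finset.sum_le_sum fun j hj => Real.rpow_le_rpow (ha j hj) (hab j hj) hp)
    (one_div_nonneg.mpr hp)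

theorem continuous_rpow_sum_rpow {J : Type*} (s : Finset J) {p : ℝ} (hp : 0 ≤ p) :
    Continuous fun u : J → ℝ => (∑ j ∈ s, u j ^ p) ^ (1 / p) :=
  (continuous_finsetSum _ fun j _ =>
    (continuous_apply j).rpow_const fun _ => Or.inr hp).rpow_const
      fun _ => Or.inr (one_div_nonneg.mpr hp)

theorem exists_norm_le_one_norm_smul_eq (𝕜 : Type*) [RCLike 𝕜] {E : Type*}
    [NormedAddCommGroup E] [NormedSpace 𝕜 E] (z : E) :
    ∃ u : E, ‖u‖ ≤ 1 ∧ (‖z‖ : 𝕜) • u = z := by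
  rcases eq_or_ne z 0 with rfl | hz
  · exact ⟨0, by simp⟩
  · exact ⟨(‖z‖⁻¹ : 𝕜) • z, (norm_smul_inv_norm hz).le,
      smul_inv_smul₀ (RCLike.ofReal_ne_zero.mpr (norm_ne_zero_iff.mpr hz)) z⟩

theorem weakLpNorm_nonneg (𝕜 : Type*) [RCLike 𝕜] {E : Type*} [NormedAddCommGroup E]
    [NormedSpace 𝕜 E] (q : ℝ) {m : ℕ} (x : Fin m → E) : 0 ≤ weakLpNorm 𝕜 q x :=
  Real.iSup_nonneg fun _ => by positivity

section CurryNorm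

variable {𝕜 : Type*} [NontriviallyNormedField 𝕜] {ι : Type*} [DecidableEq ι] {E : ι → Type*}
  [∀ i, SeminormedAddCommGroup (E i)] [∀ i, NormedSpace 𝕜 (E i)]
  {F : Type*} [SeminormedAddCommGroup F] [NormedSpace 𝕜 F]

/-- The operator norm of the multilinear map `Ψᵢ(T)(a)` obtained from `T` by fixing its `i`-th
argument to be `a`, written as a supremum over the closed unit balls of the remaining spaces. -/
noncomputable def curryNorm (T : ContinuousMultilinearMap 𝕜 E F) (i : ι) (a : E i) : ℝ :=
  ⨆ y : ∀ k : {k // k ≠ i}, {z : E k // ‖z‖ ≤ 1},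
    ‖T ((Equiv.piSplitAt i E).symm (a, fun k => (y k).1))‖

theorem curryNorm_nonneg (T : ContinuousMultilinearMap 𝕜 E F) (i : ι) (a : E i) :
    0 ≤ curryNorm T i a :=
  Real.iSup_nonneg fun _ => norm_nonneg _

theorem bddAbove_range_norm_apply_piSplitAt_symm [Finite ι]
    (T : ContinuousMultilinearMap 𝕜 E F) (i : ι) (a : E i) :
    BddAbove (Set.range fun y : ∀ k : {k // k ≠ i}, {z : E k // ‖z‖ ≤ 1} =>
      ‖T ((Equiv.piSplitAt i E).symm (a, fun k => (y k).1))‖) := by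
  cases nonempty_fintype ι
  refine ⟨‖T‖ * ∏ _ : ι, max ‖a‖ 1, ?_⟩
  rintro _ ⟨y, rfl⟩
  refine T.le_opNorm_mul_prod_of_le fun k => ?_
  by_cases hk : k = i
  · subst hk
    simp [Equiv.piSplitAt]
  · simp only [Equiv.piSplitAt_symm_apply, hk, dite_false]
    exact (y ⟨k, hk⟩).2.trans (le_max_right _ _)

theorem rpow_sum_curryNorm_rpow_le [Finite ι] {J : Type*} [Fintype J] {p : ℝ} (hp : 0 ≤ p)
    {T : ContinuousMultilinearMap 𝕜 E F} {i : ι} {a : J → E i} {A : ℝ}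
    (h : ∀ x : ∀ k, J → E k, x i = a → (∀ k ≠ i, ∀ j, ‖x k j‖ ≤ 1) →
      (∑ j, ‖T (fun k => x k j)‖ ^ p) ^ (1 / p) ≤ A) :
    (∑ j, curryNorm T i (a j) ^ p) ^ (1 / p) ≤ A := by
  have (k : ι) : Nonempty {z : E k // ‖z‖ ≤ 1} := ⟨0, by simp⟩
  refine pi_iSup_mem_of_isClosed
    (fun j => bddAbove_range_norm_apply_piSplitAt_symm T i (a j))
    (isClosed_Iic.preimage (continuous_rpow_sum_rpow Finset.univ hp)) fun y => ?_
  refine h (fun k j => (Equiv.piSplitAt i E).symm (a j, fun k => (y j k).1) k) ?_ ?_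
  · simp
  · intro k hk j
    simpa [hk] using (y j ⟨k, hk⟩).2

end CurryNorm

section Summing

variable {𝕜 : Type*} [RCLike 𝕜] {ι : Type*} [Fintype ι] [DecidableEq ι] {E : ι → Type*}
  [∀ i, NormedAddCommGroup (E i)] [∀ i, NormedSpace 𝕜 (E i)]
  {F : Type*} [SeminormedAddCommGroup F] [NormedSpace 𝕜 F]

theorem norm_apply_le_curryNorm_mul_prod (T : ContinuousMultilinearMap 𝕜 E F) (i : ι)
    (v : ∀ k, E k) :
    ‖T v‖ ≤ curryNorm T i (v i) * ∏ k ∈ Finset.univ.erase i, ‖v k‖ := by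
  choose u hu huv using fun k => exists_norm_le_one_norm_smul_eq 𝕜 (v k)
  let c : ι → 𝕜 := Function.update (fun k => (‖v k‖ : 𝕜)) i 1
  let w : ∀ k, E k := (Equiv.piSplitAt i E).symm (v i, fun k => u k)
  have hv : v = fun k => c k • w k := by
    funext k
    by_cases hk : k = i
    · subst hk
      simp [c, w]
    · simp [c, w, hk, huv]
  have hc : ‖∏ k, c k‖ = ∏ k ∈ Finset.univ.erase i, ‖v k‖ := by
    simp [c, norm_prod, Finset.prod_update_of_mem, Finset.sdiff_singleton_eq_erase]
  calc ‖T v‖ = ‖T w‖ * ∏ k ∈ Finset.univ.erase i, ‖v k‖ := by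
        conv_lhs => rw [hv, T.map_smul_univ, norm_smul, hc, mul_comm]
    _ ≤ curryNorm T i (v i) * ∏ k ∈ Finset.univ.erase i, ‖v k‖ := by
        gcongr
        exact le_ciSup (bddAbove_range_norm_apply_piSplitAt_symm T i (v i))
          fun k => ⟨u k, hu k⟩

variable {J : Type*} [Fintype J] {p : ℝ}

theorem rpow_sum_norm_apply_rpow_le_mul_prod (hp : 0 < p)
    (T : ContinuousMultilinearMap 𝕜 E F) (i : ι) (x : ∀ k, J → E k) :
    (∑ j, ‖T (fun k => x k j)‖ ^ p) ^ (1 / p) ≤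
      (∑ j, curryNorm T i (x i j) ^ p) ^ (1 / p) *
        ∏ k ∈ Finset.univ.erase i, ⨆ j, ‖x k j‖ := by
  have hprod : 0 ≤ ∏ k ∈ Finset.univ.erase i, ⨆ j, ‖x k j‖ :=
    Finset.prod_nonneg fun _ _ => Real.iSup_nonneg fun _ => norm_nonneg _
  rw [← rpow_sum_mul_rpow _ hp.ne' (fun j _ => curryNorm_nonneg T i (x i j)) hprod]
  refine rpow_sum_rpow_le_rpow_sum_rpow _ hp.le (fun _ _ => norm_nonneg _) fun j _ => ?_
  refine (norm_apply_le_curryNorm_mul_prod T i fun k => x k j).trans ?_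
  have hle (k : ι) : ‖x k j‖ ≤ ⨆ j, ‖x k j‖ :=
    le_ciSup (f := fun j => ‖x k j‖) (Set.finite_range _).bddAbove j
  gcongr with k
  · exact curryNorm_nonneg T i (x i j)
  · exact hle k

theorem rpow_sum_curryNorm_rpow_le_iff (hp : 0 < p) (T : ContinuousMultilinearMap 𝕜 E F) (i : ι)
    (a : J → E i) {A : ℝ} (hA : 0 ≤ A) :
    (∑ j, curryNorm T i (a j) ^ p) ^ (1 / p) ≤ A ↔
      ∀ x : ∀ k, J → E k, x i = a →
        (∑ j, ‖T (fun k => x k j)‖ ^ p) ^ (1 / p) ≤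
          A * ∏ k ∈ Finset.univ.erase i, ⨆ j, ‖x k j‖ := by
  constructor
  · rintro h x rfl
    refine (rpow_sum_norm_apply_rpow_le_mul_prod hp T i x).trans ?_
    gcongr
    exact Finset.prod_nonneg fun _ _ => Real.iSup_nonneg fun _ => norm_nonneg _
  · refine fun h => rpow_sum_curryNorm_rpow_le hp.le fun x hxa hx => (h x hxa).trans ?_
    refine mul_le_of_le_one_right hA (Finset.prod_le_one
      (fun _ _ => Real.iSup_nonneg fun _ => norm_nonneg _) fun k hk => ?_)
    exact Real.iSup_le (hx k (Finset.ne_of_mem_erase hk)) zero_le_one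

theorem absSummingType_iff_general (hp : 0 < p) (T : ContinuousMultilinearMap 𝕜 E F) :
    (∀ i, ∃ C, 0 ≤ C ∧ ∀ (m : ℕ) (x : Fin m → E i),
        (∑ j, curryNorm T i (x j) ^ p) ^ (1 / p) ≤ C * weakLpNorm 𝕜 p x) ↔
    (∀ i, ∃ C, 0 ≤ C ∧ ∀ (m : ℕ) (x : ∀ k, Fin m → E k),
        (∑ j, ‖T (fun k => x k j)‖ ^ p) ^ (1 / p) ≤
          C * weakLpNorm 𝕜 p (x i) * ∏ k ∈ Finset.univ.erase i, ⨆ j, ‖x k j‖) := by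
  refine forall_congr' fun i => exists_congr fun C => and_congr_right fun hC =>
    forall_congr' fun m => ?_
  simp only [rpow_sum_curryNorm_rpow_le_iff hp T i _ (mul_nonneg hC (weakLpNorm_nonneg 𝕜 p _))]
  exact ⟨fun h x => h (x i) x rfl, fun h _ x hx => hx ▸ h x⟩

end Summing

/-- `T` is of absolutely `p`-summing type (each `Ψᵢ(T)` is an absolutely
`p`-summing linear operator, the norm of `Ψᵢ(T)(x)` being the sup over the product of the
closed unit balls of the remaining coordinates) if and only if for every `i` it is absolutely
`(p; q₁,…,qₙ)`-summing with `qᵢ = p` and `q_k = ∞` for `k ≠ i` (weak `ℓ_∞` norm = max of the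
norms). -/
theorem absSummingType_iff {𝕜 : Type*} [RCLike 𝕜] {E : Type*} [NormedAddCommGroup E]
    [NormedSpace 𝕜 E] [CompleteSpace E]
    {F : Type*} [NormedAddCommGroup F] [NormedSpace 𝕜 F] [CompleteSpace F]
    {n : ℕ} (hn : 2 ≤ n) {p : ℝ} (hp : 0 < p)
    (T : ContinuousMultilinearMap 𝕜 (fun _ : Fin n => E) F) :
    (∀ i : Fin n, ∃ C, 0 ≤ C ∧ ∀ (m : ℕ) (x : Fin m → E),
        (∑ j, (⨆ y : {k : Fin n // k ≠ i} → {z : E // ‖z‖ ≤ 1},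
            ‖T (fun k => if h : k = i then x j else (y ⟨k, h⟩).1)‖) ^ p) ^ (1 / p)
          ≤ C * weakLpNorm 𝕜 p x) ↔
    (∀ i : Fin n, ∃ C, 0 ≤ C ∧ ∀ (m : ℕ) (x : Fin n → Fin m → E),
        (∑ j, ‖T (fun k => x k j)‖ ^ p) ^ (1 / p) ≤
          C * weakLpNorm 𝕜 p (x i) * ∏ k ∈ Finset.univ.erase i, ⨆ j, ‖x k j‖) := by
  simpa only [curryNorm, Equiv.piSplitAt, Equiv.coe_fn_symm_mk, eq_rec_constant] using
    absSummingType_iff_general hp T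
end

section
/- Let E, F be Banach spaces, n ≥ 2 and 0 < p < ∞. Every p-semi-integral continuous n-linear map T : E × ⋯ × E → F is strongly p-summing; indeed, for every m ∈ ℕ and all finite families x_j^{(k)} ∈ E, (∑_{j=1}^m ‖T(x_j^{(1)}, …, x_j^{(n)})‖^p)^{1/p} ≤ ‖T‖_{si,p} · sup_{φ ∈ B} (∑_{j=1}^m |φ(x_j^{(1)}, …, x_j^{(n)})|^p)^{1/p}, where B is the closed unit ball of the space of continuous n-linear forms on E × ⋯ × E. -/
open MeasureTheory

/-!
A point `(φ₁, …, φₙ)` of the product of the dual unit balls defines the continuous `n`-linear form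
`x ↦ φ₁(x₁) ⋯ φₙ(xₙ)`, of norm at most one. Raising the semi-integral inequality to the power `p`
and summing over a finite family bounds `∑ⱼ ‖T(xⱼ)‖ ^ p` by `C ^ p` times the average of
`∑ⱼ |φ₁(xⱼ⁽¹⁾) ⋯ φₙ(xⱼ⁽ⁿ⁾)| ^ p` against a probability measure, hence by `C ^ p` times a supremum
over forms of norm at most one. The supremum does not depend on `C`, so one may pass to the infimum
of the admissible constants without knowing that it is attained.
-/

section MultilinearForms

variable {𝕜 : Type*} [NontriviallyNormedField 𝕜] {ι κ : Type*} [Fintype ι] [Fintype κ]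
  {E : ι → Type*} [∀ i, SeminormedAddCommGroup (E i)] [∀ i, NormedSpace 𝕜 (E i)]
  {F : Type*} [SeminormedAddCommGroup F]

variable (𝕜) in
/-- The multilinear analogue of the weak `ℓ_p` norm: the supremum of the `ℓ_p` norms of
`(φ (x j))_j` over the closed unit ball of the space of continuous multilinear forms. -/
noncomputable def multilinearWeakLpNorm (p : ℝ) (x : κ → ∀ i, E i) : ℝ :=
  ⨆ φ : {φ : ContinuousMultilinearMap 𝕜 E 𝕜 // ‖φ‖ ≤ 1}, (∑ j, ‖φ.1 (x j)‖ ^ p) ^ (1 / p)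

theorem multilinearWeakLpNorm_nonneg (p : ℝ) (x : κ → ∀ i, E i) :
    0 ≤ multilinearWeakLpNorm 𝕜 p x :=
  Real.iSup_nonneg fun _ => by positivity

theorem bddAbove_range_multilinearForm_lpNorm {p : ℝ} (hp : 0 ≤ p) (x : κ → ∀ i, E i) :
    BddAbove (Set.range fun φ : {φ : ContinuousMultilinearMap 𝕜 E 𝕜 // ‖φ‖ ≤ 1} =>
      (∑ j, ‖φ.1 (x j)‖ ^ p) ^ (1 / p)) := by
  refine ⟨(∑ j, (1 * ∏ i, ‖x j i‖) ^ p) ^ (1 / p), ?_⟩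
  rintro _ ⟨φ, rfl⟩
  dsimp only
  gcongr with j
  exact φ.1.le_of_opNorm_le φ.2 (x j)

theorem sum_norm_rpow_le_multilinearWeakLpNorm_rpow {p : ℝ} (hp : 0 < p) (x : κ → ∀ i, E i)
    {φ : ContinuousMultilinearMap 𝕜 E 𝕜} (hφ : ‖φ‖ ≤ 1) :
    ∑ j, ‖φ (x j)‖ ^ p ≤ multilinearWeakLpNorm 𝕜 p x ^ p := by
  rw [← Real.rpow_inv_le_iff_of_pos (by positivity) (multilinearWeakLpNorm_nonneg p x) hp,
    ← one_div]
  exact le_ciSup (bddAbove_range_multilinearForm_lpNorm hp.le x) ⟨φ, hφ⟩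

variable (𝕜) in
/-- `T` is strongly `p`-summing with constant `C`. As in `SemiIntegralWith`, `T` is an arbitrary
map; `x j i` is the `i`-th entry of the `j`-th argument of `T`. -/
def StronglySummingWith (p C : ℝ) (T : (∀ i, E i) → F) : Prop :=
  ∀ (m : ℕ) (x : Fin m → ∀ i, E i),
    (∑ j, ‖T (x j)‖ ^ p) ^ (1 / p) ≤ C * multilinearWeakLpNorm 𝕜 p x

theorem StronglySummingWith.csInf {p : ℝ} {T : (∀ i, E i) → F} {s : Set ℝ} (hs : s.Nonempty)
    (hT : ∀ C ∈ s, StronglySummingWith 𝕜 p C T) :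
    StronglySummingWith 𝕜 p (sInf s) T := by
  intro m x
  have := hs.to_subtype
  rw [sInf_eq_iInf', Real.iInf_mul_of_nonneg (multilinearWeakLpNorm_nonneg p x)]
  exact le_ciInf fun C => hT C C.2 m x

end MultilinearForms

/-- The product of the closed dual unit balls, each with its weak-star topology: the space carrying
the measures in `SemiIntegralWith`. -/
abbrev DualBallProd (𝕜 : Type*) [NontriviallyNormedField 𝕜] {ι : Type*} (E : ι → Type*)
    [∀ i, SeminormedAddCommGroup (E i)] [∀ i, NormedSpace 𝕜 (E i)] : Type _ :=
  ∀ i, {φ : WeakDual 𝕜 (E i) // ∀ z, ‖φ z‖ ≤ ‖z‖}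

namespace DualBallProd

variable {𝕜 : Type*} [NontriviallyNormedField 𝕜] {ι : Type*} [Fintype ι]
  {E : ι → Type*} [∀ i, SeminormedAddCommGroup (E i)] [∀ i, NormedSpace 𝕜 (E i)]

/-- The multilinear form `x ↦ ∏ i, φ i (x i)` of a family of functionals. -/
noncomputable def prodForm (φ : DualBallProd 𝕜 E) : ContinuousMultilinearMap 𝕜 E 𝕜 :=
  (ContinuousMultilinearMap.mkPiAlgebra 𝕜 ι 𝕜).compContinuousLinearMap
    fun i => WeakDual.toStrongDual (φ i).1

theorem prodForm_apply (φ : DualBallProd 𝕜 E) (x : ∀ i, E i) :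
    φ.prodForm x = ∏ i, (φ i).1 (x i) :=
  rfl

theorem norm_prodForm_le_one (φ : DualBallProd 𝕜 E) : ‖φ.prodForm‖ ≤ 1 := by
  refine ContinuousMultilinearMap.opNorm_le_bound zero_le_one fun x => ?_
  rw [prodForm_apply, norm_prod, one_mul]
  gcongr with i
  exact (φ i).2 (x i)

theorem norm_prodForm_rpow (φ : DualBallProd 𝕜 E) (x : ∀ i, E i) (p : ℝ) :
    ‖φ.prodForm x‖ ^ p = ∏ i, ‖(φ i).1 (x i)‖ ^ p := by
  rw [prodForm_apply, norm_prod, Real.finsetProd_rpow _ _ fun i _ => norm_nonneg _]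

theorem continuous_prodForm_apply (x : ∀ i, E i) :
    Continuous fun φ : DualBallProd 𝕜 E => φ.prodForm x :=
  continuous_finsetProd _ fun i _ => (WeakDual.eval_continuous (x i)).comp
    (continuous_subtype_val.comp (continuous_apply i))

theorem integrable_norm_prodForm_rpow [MeasurableSpace (DualBallProd 𝕜 E)]
    [OpensMeasurableSpace (DualBallProd 𝕜 E)] (μ : Measure (DualBallProd 𝕜 E))
    [IsFiniteMeasure μ] {p : ℝ} (hp : 0 ≤ p) (x : ∀ i, E i) :
    Integrable (fun φ : DualBallProd 𝕜 E => ‖φ.prodForm x‖ ^ p) μ := by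
  have hcont : Continuous fun φ : DualBallProd 𝕜 E => ‖φ.prodForm x‖ ^ p :=
    (continuous_prodForm_apply x).norm.rpow_const fun _ => Or.inr hp
  refine .of_bound hcont.measurable.aestronglyMeasurable ((1 * ∏ i, ‖x i‖) ^ p) (.of_forall ?_)
  intro φ
  rw [Real.norm_of_nonneg (by positivity)]
  gcongr
  exact φ.prodForm.le_of_opNorm_le φ.norm_prodForm_le_one x

end DualBallProd

section SemiIntegral

variable {𝕜 : Type*} [RCLike 𝕜] {ι : Type*} [Fintype ι]
  {E : ι → Type*} [∀ i, NormedAddCommGroup (E i)] [∀ i, NormedSpace 𝕜 (E i)]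
  {F : Type*} [NormedAddCommGroup F] {p C : ℝ} {T : (∀ i, E i) → F}

namespace SemiIntegralWith

theorem exists_norm_rpow_le_integral (hT : SemiIntegralWith 𝕜 p C T) (hp : 0 < p) (hC : 0 ≤ C) :
    letI : MeasurableSpace (DualBallProd 𝕜 E) := borel _
    ∃ μ : Measure (DualBallProd 𝕜 E), IsProbabilityMeasure μ ∧
      ∀ x : ∀ i, E i, ‖T x‖ ^ p ≤ C ^ p * ∫ φ, ‖φ.prodForm x‖ ^ p ∂μ := by
  let _ : MeasurableSpace (DualBallProd 𝕜 E) := borel _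
  obtain ⟨μ, hμ, -, hTμ⟩ := hT
  refine ⟨μ, hμ, fun x => ?_⟩
  have hI : 0 ≤ ∫ φ : DualBallProd 𝕜 E, ‖φ.prodForm x‖ ^ p ∂μ :=
    integral_nonneg fun φ => by positivity
  calc
    ‖T x‖ ^ p ≤ (C * (∫ φ : DualBallProd 𝕜 E, ‖φ.prodForm x‖ ^ p ∂μ) ^ (1 / p)) ^ p := by
      gcongr
      simpa only [DualBallProd.norm_prodForm_rpow] using hTμ x
    _ = C ^ p * ∫ φ : DualBallProd 𝕜 E, ‖φ.prodForm x‖ ^ p ∂μ := by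
      rw [Real.mul_rpow hC (by positivity), one_div, Real.rpow_inv_rpow hI hp.ne']

theorem sum_norm_rpow_le {κ : Type*} [Fintype κ] (hT : SemiIntegralWith 𝕜 p C T) (hp : 0 < p)
    (hC : 0 ≤ C) (x : κ → ∀ i, E i) :
    ∑ j, ‖T (x j)‖ ^ p ≤ C ^ p * multilinearWeakLpNorm 𝕜 p x ^ p := by
  let _ : MeasurableSpace (DualBallProd 𝕜 E) := borel _
  have : BorelSpace (DualBallProd 𝕜 E) := ⟨rfl⟩
  obtain ⟨μ, hμ, hTμ⟩ := hT.exists_norm_rpow_le_integral hp hC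
  have hint (j : κ) : Integrable (fun φ : DualBallProd 𝕜 E => ‖φ.prodForm (x j)‖ ^ p) μ :=
    DualBallProd.integrable_norm_prodForm_rpow μ hp.le (x j)
  have havg : ∫ φ : DualBallProd 𝕜 E, ∑ j, ‖φ.prodForm (x j)‖ ^ p ∂μ ≤
      multilinearWeakLpNorm 𝕜 p x ^ p := by
    simpa using integral_mono (integrable_finsetSum _ fun j _ => hint j) (integrable_const _)
      fun φ => sum_norm_rpow_le_multilinearWeakLpNorm_rpow hp x φ.norm_prodForm_le_one
  calc
    ∑ j, ‖T (x j)‖ ^ p ≤ ∑ j, C ^ p * ∫ φ : DualBallProd 𝕜 E, ‖φ.prodForm (x j)‖ ^ p ∂μ := by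
      gcongr with j
      exact hTμ (x j)
    _ = C ^ p * ∫ φ : DualBallProd 𝕜 E, ∑ j, ‖φ.prodForm (x j)‖ ^ p ∂μ := by
      rw [← Finset.mul_sum, integral_finsetSum _ fun j _ => hint j]
    _ ≤ C ^ p * multilinearWeakLpNorm 𝕜 p x ^ p := by gcongr

theorem stronglySummingWith (hT : SemiIntegralWith 𝕜 p C T) (hp : 0 < p) (hC : 0 ≤ C) :
    StronglySummingWith 𝕜 p C T := by
  intro m x
  have hx := multilinearWeakLpNorm_nonneg (𝕜 := 𝕜) p x
  rw [one_div, Real.rpow_inv_le_iff_of_pos (by positivity) (by positivity) hp, Real.mul_rpow hC hx]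
  exact hT.sum_norm_rpow_le hp hC x

end SemiIntegralWith

theorem stronglySumming_of_semiIntegral_general (hp : 0 < p)
    (hT : ∃ C, 0 ≤ C ∧ SemiIntegralWith 𝕜 p C T) :
    StronglySummingWith 𝕜 p (siNorm 𝕜 p T) T :=
  .csInf hT fun _ hC => hC.2.stronglySummingWith hp hC.1

end SemiIntegral

/-- Every `p`-semi-integral continuous `n`-linear map (`n ≥ 2`) is strongly
`p`-summing, with constant `‖T‖_{si,p}`: the right-hand side is the sup over the closed unit
ball of the space of continuous `n`-linear forms. -/
theorem stronglySumming_of_semiIntegral {𝕜 : Type*} [RCLike 𝕜] {E : Type*}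
    [NormedAddCommGroup E] [NormedSpace 𝕜 E] [CompleteSpace E]
    {F : Type*} [NormedAddCommGroup F] [NormedSpace 𝕜 F] [CompleteSpace F]
    {n : ℕ} (hn : 2 ≤ n) {p : ℝ} (hp : 0 < p)
    (T : ContinuousMultilinearMap 𝕜 (fun _ : Fin n => E) F)
    (hT : ∃ C, 0 ≤ C ∧ SemiIntegralWith 𝕜 p C ⇑T) :
    ∀ (m : ℕ) (x : Fin n → Fin m → E),
      (∑ j, ‖T (fun i => x i j)‖ ^ p) ^ (1 / p) ≤
        siNorm 𝕜 p ⇑T *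
          ⨆ φ : {φ : ContinuousMultilinearMap 𝕜 (fun _ : Fin n => E) 𝕜 // ‖φ‖ ≤ 1},
            (∑ j, ‖φ.1 (fun i => x i j)‖ ^ p) ^ (1 / p) := by
  intro m x
  exact stronglySumming_of_semiIntegral_general hp hT m fun j i => x i j
end
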